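/- arXiv:1101.0790 — 3 statements merged into one kernel-verified Lean document; each statement's English description precedes it below -/
import Mathlib

section
/- Fix integers n ≥ 2 and p ≥ 1, and let A_{11} ∈ M_p and A_{ij} ∈ M_p (for 1 ≤ i,j ≤ n with i ≠ j) be given. Then the following are equivalent: (i) for every r ≥ 1 and every family of matrices B_{ij} ∈ M_r (i ≠ j) such that the n×n block matrix whose diagonal blocks are all (1/n)·I_r and whose (i,j) off-diagonal block is B_{ij} is positive semidefinite in M_{nr}, the matrix I_r ⊗ A_{11} + Σ_{i≠j} B_{ij} ⊗ A_{ij} is positive semidefinite in M_{rp}; (ii) for every r ≥ 1 and every family of matrices C_{ij} ∈ M_r (i ≠ j) such that the n×n block matrix whose diagonal blocks are all I_r and whose (i,j) off-diagonal block is C_{ij} is positive semidefinite in M_{nr}, the matrix I_r ⊗ A_{11} + Σ_{i≠j} (1/n)·C_{ij} ⊗ A_{ij} is positive semidefinite in M_{rp}; (iii) there exist B_1, …, B_n ∈ M_p with Σ_{i=1}^n B_i = (n − n²)·A_{11} such that the block matrix Σ_{i=1}^n E_{ii} ⊗ (n·A_{11} + B_i) + Σ_{i≠j} E_{ij} ⊗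 A_{ij} is positive semidefinite in M_{np}; (iv) there exist matrices R_{ij} ∈ M_p (1 ≤ i,j ≤ n) with R_{ij} = A_{ij} for all i ≠ j and Σ_{i=1}^n R_{ii} = n·A_{11}, such that the n×n block matrix [R_{ij}] is positive semidefinite in M_{np}. -/
/-!
Conditions (i) and (ii) differ by the rescaling `B = C / n`, and (iii) and (iv) by the substitution
`R i i = n • A11 + B i`.

(iv) implies (i): if `R` is a positive lifting, then `I ⊗ A11 + ∑ B i j ⊗ A i j` equals
`∑ i, ∑ j, B i j ⊗ R i j` with `B i i = n⁻¹ • I` (`sum_split`). This is a block Schur product of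
positive semidefinite matrices, hence positive semidefinite (`sum_kron_posSemidef`).

(i) implies (iv) is cone duality. Let `X` have off-diagonal blocks `A i j` and diagonal blocks
`A11`. Testing (i) on scalars shows that `X` is Hermitian and `A11` positive semidefinite, and that
`A = 0` when `A11 = 0`. Liftings as in (iv) are the positive semidefinite matrices sent to `X` by the
projection `avg` that averages the diagonal blocks. If there are none, Hahn-Banach separation of
`X` from a compact base of the cone gives a functional, invariant under `avg`, which is positive on
nonzero positive semidefinite matrices and negative at `X` (`exists_functional`). It is represented
by a positive definite `H` with constant diagonal block `G = Sᴴ * S` (`exists_density`). Then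
`B i j = n⁻¹ • S⁻¹ᴴ * H i j * S⁻¹` is admissible in (i), and evaluating the resulting quadratic form
at the vectorization of `S` shows that the functional is nonnegative at `X` (`pairing_nonneg`), a
contradiction.
-/


open Kronecker ComplexOrder

/-- The `m × m` block matrix with `p × p` blocks `R i j`, viewed as an element of
`M_{mp}` (indexed by `Fin m × Fin p`). -/
def blockMat {m p : ℕ} (R : Fin m → Fin m → Matrix (Fin p) (Fin p) ℂ) :
    Matrix (Fin m × Fin p) (Fin m × Fin p) ℂ :=
  Matrix.of fun ik jl => R ik.1 jl.1 ik.2 jl.2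

/-- Condition (i): positivity under all contractive block systems with diagonal `(1/n)·I_r`. -/
def Cond1 (n p : ℕ) (A11 : Matrix (Fin p) (Fin p) ℂ)
    (A : Fin n → Fin n → Matrix (Fin p) (Fin p) ℂ) : Prop :=
  ∀ r : ℕ, 1 ≤ r → ∀ B : Fin n → Fin n → Matrix (Fin r) (Fin r) ℂ,
    (blockMat (fun i j =>
        if i = j then ((n : ℂ)⁻¹) • (1 : Matrix (Fin r) (Fin r) ℂ) else B i j)).PosSemidef →
    ((1 : Matrix (Fin r) (Fin r) ℂ) ⊗ₖ A11 +
      ∑ i : Fin n, ∑ j : Fin n, if i ≠ j then B i j ⊗ₖ A i j else 0).PosSemidef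

/-- Condition (ii): positivity under all contractive block systems with diagonal `I_r`. -/
def Cond2 (n p : ℕ) (A11 : Matrix (Fin p) (Fin p) ℂ)
    (A : Fin n → Fin n → Matrix (Fin p) (Fin p) ℂ) : Prop :=
  ∀ r : ℕ, 1 ≤ r → ∀ C : Fin n → Fin n → Matrix (Fin r) (Fin r) ℂ,
    (blockMat (fun i j =>
        if i = j then (1 : Matrix (Fin r) (Fin r) ℂ) else C i j)).PosSemidef →
    ((1 : Matrix (Fin r) (Fin r) ℂ) ⊗ₖ A11 +
      ∑ i : Fin n, ∑ j : Fin n,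
        if i ≠ j then ((n : ℂ)⁻¹) • (C i j ⊗ₖ A i j) else 0).PosSemidef

/-- Condition (iii): existence of diagonal corrections `B_i` with `∑ B_i = (n - n²) A₁₁`. -/
def Cond3 (n p : ℕ) (A11 : Matrix (Fin p) (Fin p) ℂ)
    (A : Fin n → Fin n → Matrix (Fin p) (Fin p) ℂ) : Prop :=
  ∃ B : Fin n → Matrix (Fin p) (Fin p) ℂ,
    (∑ i, B i) = ((n : ℂ) - (n : ℂ) ^ 2) • A11 ∧
    (blockMat (fun i j =>
        if i = j then (n : ℂ) • A11 + B i else A i j)).PosSemidef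

/-- Condition (iv): existence of a positive block lifting `R` with `R_{ij} = A_{ij}` off the
diagonal and `∑ R_{ii} = n·A₁₁`. -/
def Cond4 (n p : ℕ) (A11 : Matrix (Fin p) (Fin p) ℂ)
    (A : Fin n → Fin n → Matrix (Fin p) (Fin p) ℂ) : Prop :=
  ∃ R : Fin n → Fin n → Matrix (Fin p) (Fin p) ℂ,
    (∀ i j, i ≠ j → R i j = A i j) ∧
    (∑ i, R i i) = (n : ℂ) • A11 ∧
    (blockMat R).PosSemidef

open Matrix

/-! ### Block Schur products of positive semidefinite matrices -/

lemma psd_re_nonneg {κ : Type*} [Fintype κ] {M : Matrix κ κ ℂ} (hM : M.PosSemidef) (v : κ → ℂ) :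
    0 ≤ (∑ k, ∑ l, star (v k) * M k l * v l).re := by
  have h := hM.dotProduct_mulVec_nonneg v
  have e : star v ⬝ᵥ (M *ᵥ v) = ∑ k, ∑ l, star (v k) * M k l * v l := by
    simp [dotProduct, mulVec, Finset.mul_sum, mul_assoc]
  rw [e] at h
  exact (Complex.le_def.1 h).1

/-- Summing all blocks of a positive semidefinite block matrix compresses it by the column of
identity blocks, so the result is again positive semidefinite. -/
lemma sum_blocks_posSemidef {ι κ : Type*} [Fintype ι] [Fintype κ]
    {M : Matrix (ι × κ) (ι × κ) ℂ} (hM : M.PosSemidef) :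
    (Matrix.of fun a b => ∑ i, ∑ j, M (i, a) (j, b) : Matrix κ κ ℂ).PosSemidef := by
  classical
  let V : Matrix (ι × κ) κ ℂ := Matrix.of fun k b => if k.2 = b then 1 else 0
  have h := hM.conjTranspose_mul_mul_same V
  convert h using 1
  ext a b
  simp [Matrix.mul_apply, V, Fintype.sum_prod_type]
  exact Finset.sum_comm

/-- The block Schur product: the matrix in question is a compression of a principal submatrix of
`blockMat B ⊗ₖ blockMat R`. -/
lemma sum_kron_posSemidef {n r p : ℕ} {B : Fin n → Fin n → Matrix (Fin r) (Fin r) ℂ}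
    {R : Fin n → Fin n → Matrix (Fin p) (Fin p) ℂ}
    (hB : (blockMat B).PosSemidef) (hR : (blockMat R).PosSemidef) :
    (∑ i, ∑ j, B i j ⊗ₖ R i j).PosSemidef := by
  have h := (hB.kronecker hR).submatrix
    (fun x : Fin n × (Fin r × Fin p) => ((x.1, x.2.1), (x.1, x.2.2)))
  convert sum_blocks_posSemidef h using 1
  ext a b
  simp [Matrix.sum_apply, blockMat, kroneckerMap_apply]

/-! ### Averaging the diagonal blocks -/

/-- The projection replacing every diagonal block by the average of the diagonal blocks. -/
noncomputable def avg (n p : ℕ) :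
    Matrix (Fin n × Fin p) (Fin n × Fin p) ℂ →ₗ[ℂ] Matrix (Fin n × Fin p) (Fin n × Fin p) ℂ where
  toFun R := Matrix.of fun k l =>
    if k.1 = l.1 then (n : ℂ)⁻¹ * ∑ m, R (m, k.2) (m, l.2) else R k l
  map_add' R S := by
    ext k l
    by_cases h : k.1 = l.1 <;> simp [h, Finset.sum_add_distrib, mul_add]
  map_smul' c R := by
    ext k l
    by_cases h : k.1 = l.1 <;> simp [h, ← Finset.mul_sum, mul_left_comm]

lemma avg_apply {n p : ℕ} (R : Matrix (Fin n × Fin p) (Fin n × Fin p) ℂ) (k l : Fin n × Fin p) :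
    avg n p R k l = if k.1 = l.1 then (n : ℂ)⁻¹ * ∑ m, R (m, k.2) (m, l.2) else R k l := rfl

lemma avg_avg {n p : ℕ} (hn : n ≠ 0) (R : Matrix (Fin n × Fin p) (Fin n × Fin p) ℂ) :
    avg n p (avg n p R) = avg n p R := by
  ext k l
  have : (n : ℂ) ≠ 0 := by exact_mod_cast hn
  by_cases h : k.1 = l.1 <;> simp [avg_apply, h, this]

lemma trace_avg {n p : ℕ} (hn : n ≠ 0) (R : Matrix (Fin n × Fin p) (Fin n × Fin p) ℂ) :
    (avg n p R).trace = R.trace := by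
  have : (n : ℂ) ≠ 0 := by exact_mod_cast hn
  simp [Matrix.trace, avg_apply, Fintype.sum_prod_type, ← Finset.mul_sum, this]
  exact Finset.sum_comm

/-- Consequently the matrix representing a functional that factors through `avg` has equal diagonal
blocks. -/
lemma avg_single {n p : ℕ} (i j : Fin n) (a b : Fin p) :
    avg n p (Matrix.single (i, a) (i, b) 1) = avg n p (Matrix.single (j, a) (j, b) 1) := by
  ext k l
  rw [avg_apply, avg_apply]
  split_ifs with h
  · congr 1
    have key : ∀ i : Fin n, ∑ m, (Matrix.single (i, a) (i, b) (1 : ℂ)) (m, k.2) (m, l.2) =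
        if a = k.2 ∧ b = l.2 then 1 else 0 := by
      intro i
      rw [Finset.sum_eq_single i]
      · simp [Matrix.single_apply]
      · intro m _ hm
        simp [hm.symm]
      · simp
    rw [key, key]
  · have key : ∀ i : Fin n, (Matrix.single (i, a) (i, b) (1 : ℂ)) k l = 0 := by
      intro i
      apply Matrix.single_apply_of_ne
      rintro ⟨rfl, rfl⟩
      exact h rfl
    rw [key, key]

/-! ### Separation from the positive liftings -/

section
open scoped MatrixOrder Matrix.Norms.L2Operator

lemma exists_factor {κ : Type*} [Fintype κ] {R : Matrix κ κ ℂ} (hR : R.PosSemidef) :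
    ∃ B : Matrix κ κ ℂ, R = Bᴴ * B := by
  classical
  exact CStarAlgebra.nonneg_iff_eq_star_mul_self.mp hR.nonneg

end

/-- Compactness comes from writing such an `R` as `Bᴴ * B`, where the entries of `B` are bounded
by `√t`. -/
lemma isCompact_psd_trace {κ : Type*} [Fintype κ] (t : ℝ) :
    IsCompact {R : Matrix κ κ ℂ | R.PosSemidef ∧ R.trace = t} := by
  classical
  have hC : IsCompact {B : Matrix κ κ ℂ | (Bᴴ * B).trace = t} := by
    have hbig : IsCompact (Set.univ.pi fun _ : κ => Set.univ.pi fun _ : κ =>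
        Metric.closedBall (0 : ℂ) (√t)) :=
      isCompact_univ_pi fun _ => isCompact_univ_pi fun _ => isCompact_closedBall _ _
    refine IsCompact.of_isClosed_subset hbig ?_ ?_
    · exact isClosed_eq (by fun_prop) continuous_const
    · intro B hB k _ l _
      have h1 : (Bᴴ * B).trace = ((∑ j, ∑ i, ‖B i j‖ ^ 2 : ℝ) : ℂ) := by
        simp [Matrix.trace, Matrix.mul_apply, Complex.conj_mul']
      have h2 : ∑ j, ∑ i, ‖B i j‖ ^ 2 = t := by
        have := h1.symm.trans hB
        exact_mod_cast this
      have h3 : ‖B k l‖ ^ 2 ≤ t := by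
        rw [← h2]
        refine le_trans ?_ (Finset.single_le_sum (f := fun j => ∑ i, ‖B i j‖ ^ 2)
          (fun j _ => by positivity) (Finset.mem_univ l))
        exact Finset.single_le_sum (f := fun i => ‖B i l‖ ^ 2)
          (fun j _ => by positivity) (Finset.mem_univ k)
      simpa using Real.le_sqrt_of_sq_le h3
  have himg := hC.image (f := fun B : Matrix κ κ ℂ => Bᴴ * B) (by fun_prop)
  convert himg using 1
  ext R
  constructor
  · rintro ⟨hR, ht⟩
    obtain ⟨B, rfl⟩ := exists_factor hR
    exact ⟨B, ht, rfl⟩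
  · rintro ⟨B, ht, rfl⟩
    exact ⟨posSemidef_conjTranspose_mul_self B, ht⟩

lemma separate_compact {κ : Type*} [Fintype κ] {Q : Set (Matrix κ κ ℂ)} (hc : Convex ℝ Q)
    (hQ : IsCompact Q) {X : Matrix κ κ ℂ} (hX : X ∉ Q) :
    ∃ (f : Matrix κ κ ℂ →ₗ[ℂ] ℂ) (u : ℝ), (∀ R ∈ Q, (f R).re < u) ∧ u < (f X).re := by
  have : LocallyConvexSpace ℝ (Matrix κ κ ℂ) :=
    inferInstanceAs (LocallyConvexSpace ℝ (κ → κ → ℂ))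
  obtain ⟨f, u, h1, h2⟩ := RCLike.geometric_hahn_banach_closed_point (𝕜 := ℂ) hc hQ.isClosed hX
  exact ⟨f.toLinearMap, u, h1, h2⟩

/-- If no positive semidefinite matrix averages to `X`, separate `X` from the compact set of averages
of positive semidefinite matrices of trace `t`, and subtract the separating functional from a
multiple of the trace: the bound becomes homogeneous, hence holds on the whole cone. -/
lemma exists_functional {n p : ℕ} (hn : n ≠ 0) {X : Matrix (Fin n × Fin p) (Fin n × Fin p) ℂ}
    (hX : avg n p X = X) {t : ℝ} (ht : 0 < t) (htr : X.trace = t)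
    (hno : ∀ R : Matrix (Fin n × Fin p) (Fin n × Fin p) ℂ, R.PosSemidef → avg n p R ≠ X) :
    ∃ h : Matrix (Fin n × Fin p) (Fin n × Fin p) ℂ →ₗ[ℂ] ℂ, (∀ Y, h (avg n p Y) = h Y) ∧
      (∀ R, R.PosSemidef → R ≠ 0 → 0 < (h R).re) ∧ (h X).re < 0 := by
  have hconv : Convex ℝ {R : Matrix (Fin n × Fin p) (Fin n × Fin p) ℂ |
      R.PosSemidef ∧ R.trace = t} := by
    rintro R ⟨hR, hRt⟩ S ⟨hS, hSt⟩ a b ha hb hab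
    refine ⟨(hR.smul ha).add (hS.smul hb), ?_⟩
    rw [Matrix.trace_add, Matrix.trace_smul, Matrix.trace_smul, hRt, hSt, ← add_smul, hab, one_smul]
  obtain ⟨f, u, h1, h2⟩ := separate_compact
    (Q := avg n p '' {R | R.PosSemidef ∧ R.trace = t})
    (hconv.is_linear_image ((avg n p).restrictScalars ℝ).isLinear)
    ((isCompact_psd_trace t).image (LinearMap.continuous_of_finiteDimensional _))
    (X := X) (by rintro ⟨R, ⟨hR, -⟩, hRX⟩; exact hno R hR hRX)
  refine ⟨((u / t : ℝ) : ℂ) • Matrix.traceLinearMap _ ℂ ℂ - f ∘ₗ avg n p, ?_, ?_, ?_⟩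
  · intro Y
    simp [avg_avg hn, trace_avg hn]
  · intro R hR hR0
    have hs := hR.trace_nonneg
    have hs0 : R.trace ≠ 0 := fun h => hR0 (hR.trace_eq_zero_iff.1 h)
    obtain ⟨s, hs'⟩ : ∃ s : ℝ, R.trace = s :=
      ⟨R.trace.re, Complex.ext rfl (Complex.le_def.1 hs).2.symm⟩
    have hspos : 0 < s := by
      rw [hs'] at hs hs0
      exact lt_of_le_of_ne (by exact_mod_cast hs) (by rintro rfl; simp at hs0)
    have hts : 0 < t / s := by positivity
    -- Rescale `R` to trace `t`.
    have := h1 _ ⟨((t / s : ℝ) : ℂ) • R, ⟨hR.smul (by exact_mod_cast hts.le), by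
      rw [Matrix.trace_smul, hs', smul_eq_mul, ← Complex.ofReal_mul]
      congr 1; field_simp⟩, rfl⟩
    rw [map_smul, map_smul, smul_eq_mul, Complex.re_ofReal_mul] at this
    have e : t / s * (f (avg n p R)).re * (s / t) = (f (avg n p R)).re := by field_simp
    have h3 := mul_lt_mul_of_pos_right this (show 0 < s / t by positivity)
    rw [e] at h3
    simp [hs']
    calc _ < _ := h3
      _ = _ := by ring
  · simp [hX, htr]
    rw [div_mul_cancel₀ _ (by exact_mod_cast ht.ne')]
    simpa using h2

/-- Under the entrywise pairing, a block-averaging functional that is positive on the nonzero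
positive semidefinite matrices is represented by a positive definite matrix with constant
diagonal block. -/
lemma exists_density {n p : ℕ} (h : Matrix (Fin n × Fin p) (Fin n × Fin p) ℂ →ₗ[ℂ] ℂ)
    (hav : ∀ Y, h (avg n p Y) = h Y) (hpos : ∀ R, R.PosSemidef → R ≠ 0 → 0 < (h R).re) :
    ∃ H : Matrix (Fin n × Fin p) (Fin n × Fin p) ℂ, H.PosDef ∧
      (∀ i j a b, H (i, a) (i, b) = H (j, a) (j, b)) ∧
      ∀ Y : Matrix (Fin n × Fin p) (Fin n × Fin p) ℂ, Y.IsHermitian →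
        (∑ k, ∑ l, H k l * Y k l).re = (h Y).re := by
  let c : Matrix (Fin n × Fin p) (Fin n × Fin p) ℂ := Matrix.of fun k l => h (Matrix.single k l 1)
  have hc : ∀ Y, h Y = ∑ k, ∑ l, c k l * Y k l := by
    intro Y
    conv_lhs => rw [Matrix.matrix_eq_sum_single Y]
    simp only [map_sum]
    refine Finset.sum_congr rfl fun k _ => Finset.sum_congr rfl fun l _ => ?_
    have : Matrix.single k l (Y k l) = Y k l • Matrix.single k l (1 : ℂ) := by simp
    rw [this, map_smul, smul_eq_mul, mul_comm]; rfl
  -- Only the real part of `h` on Hermitian matrices matters, so `c` may be made Hermitian.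
  let H : Matrix (Fin n × Fin p) (Fin n × Fin p) ℂ := (2⁻¹ : ℂ) • (c + cᴴ)
  have hH : H.IsHermitian := by
    ext k l
    simp [H, add_comm]
  have hrep : ∀ Y : Matrix (Fin n × Fin p) (Fin n × Fin p) ℂ, Y.IsHermitian →
        (∑ k, ∑ l, H k l * Y k l).re = (h Y).re := by
    intro Y hY
    have e1 : ∑ k, ∑ l, H k l * Y k l = 2⁻¹ * (h Y + star (h Y)) := by
      have e2 : star (h Y) = ∑ k, ∑ l, star (c l k) * Y k l := by
        rw [hc, Finset.sum_comm, star_sum]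
        refine Finset.sum_congr rfl fun k _ => ?_
        rw [star_sum]
        refine Finset.sum_congr rfl fun l _ => ?_
        rw [star_mul', hY.apply]
      rw [e2, hc, ← Finset.sum_add_distrib, Finset.mul_sum]
      refine Finset.sum_congr rfl fun k _ => ?_
      rw [← Finset.sum_add_distrib, Finset.mul_sum]
      refine Finset.sum_congr rfl fun l _ => ?_
      simp [H]; ring
    rw [e1]
    simp; ring
  refine ⟨H, ?_, ?_, hrep⟩
  · refine Matrix.PosDef.of_dotProduct_mulVec_pos hH fun v hv => ?_
    have hY := posSemidef_vecMulVec_star_self v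
    have hY0 : vecMulVec (star v) v ≠ 0 := by
      intro h0
      apply hv
      ext k
      have := congrFun (congrFun h0 k) k
      simpa [vecMulVec_apply] using this
    have hp := hpos _ hY hY0
    rw [← hrep _ hY.isHermitian] at hp
    have e : star v ⬝ᵥ (H *ᵥ v) = ∑ k, ∑ l, H k l * vecMulVec (star v) v k l := by
      simp [dotProduct, mulVec, Finset.mul_sum, vecMulVec_apply, mul_left_comm]
    rw [← e] at hp
    refine Complex.lt_def.2 ⟨hp, ?_⟩
    have := hH.im_star_dotProduct_mulVec_self v
    simpa using this.symm
  · have hcc : ∀ i j a b, c (i, a) (i, b) = c (j, a) (j, b) := by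
      intro i j a b
      change h _ = h _
      rw [← hav, avg_single i j, hav]
    intro i j a b
    simp [H, hcc i j]

/-! ### The elementary implications -/

/-- Since `I ⊗ A11 = ∑ i, (n⁻¹ • I) ⊗ R i i`, the matrix tested in the first condition is a full
block Schur product. -/
lemma sum_split {n r p : ℕ} (hn : n ≠ 0) {A11 : Matrix (Fin p) (Fin p) ℂ}
    {A R : Fin n → Fin n → Matrix (Fin p) (Fin p) ℂ} (B : Fin n → Fin n → Matrix (Fin r) (Fin r) ℂ)
    (hoff : ∀ i j, i ≠ j → R i j = A i j) (hsum : ∑ i, R i i = (n : ℂ) • A11) :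
    (1 : Matrix (Fin r) (Fin r) ℂ) ⊗ₖ A11 +
      ∑ i : Fin n, ∑ j : Fin n, (if i ≠ j then B i j ⊗ₖ A i j else 0) =
    ∑ i : Fin n, ∑ j : Fin n,
      (if i = j then ((n : ℂ)⁻¹) • (1 : Matrix (Fin r) (Fin r) ℂ) else B i j) ⊗ₖ R i j := by
  have hn' : (n : ℂ) ≠ 0 := by exact_mod_cast hn
  have e1 : (1 : Matrix (Fin r) (Fin r) ℂ) ⊗ₖ A11 =
      ∑ i : Fin n, ∑ j : Fin n,
        if i = j then (((n : ℂ)⁻¹) • (1 : Matrix (Fin r) (Fin r) ℂ)) ⊗ₖ R i i else 0 := by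
    have hA : A11 = (n : ℂ)⁻¹ • ∑ i, R i i := by rw [hsum, smul_smul, inv_mul_cancel₀ hn', one_smul]
    rw [hA]
    ext a b
    simp [Matrix.sum_apply, kroneckerMap_apply, Finset.mul_sum]
    exact Finset.sum_congr rfl fun _ _ => by ring
  rw [e1, ← Finset.sum_add_distrib]
  refine Finset.sum_congr rfl fun i _ => ?_
  rw [← Finset.sum_add_distrib]
  refine Finset.sum_congr rfl fun j _ => ?_
  by_cases h : i = j
  · subst h; simp
  · simp [h, hoff i j h]

lemma cond1_of_cond4 {n p : ℕ} (hn : n ≠ 0) {A11 : Matrix (Fin p) (Fin p) ℂ}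
    {A : Fin n → Fin n → Matrix (Fin p) (Fin p) ℂ} (h : Cond4 n p A11 A) : Cond1 n p A11 A := by
  obtain ⟨R, hoff, hsum, hR⟩ := h
  intro r _ B hB
  rw [sum_split hn B hoff hsum]
  exact sum_kron_posSemidef hB hR

lemma cond1_iff_cond2 {n p : ℕ} (hn : n ≠ 0) {A11 : Matrix (Fin p) (Fin p) ℂ}
    {A : Fin n → Fin n → Matrix (Fin p) (Fin p) ℂ} : Cond1 n p A11 A ↔ Cond2 n p A11 A := by
  have hn' : (n : ℂ) ≠ 0 := by exact_mod_cast hn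
  constructor
  · intro h r hr C hC
    have := h r hr (fun i j => (n : ℂ)⁻¹ • C i j) (by
      convert hC.smul (show (0 : ℂ) ≤ (n : ℂ)⁻¹ by positivity) using 1
      ext k l
      by_cases h : k.1 = l.1 <;> simp [blockMat, h])
    simpa only [smul_kronecker] using this
  · intro h r hr B hB
    have := h r hr (fun i j => (n : ℂ) • B i j) (by
      convert hB.smul (show (0 : ℂ) ≤ (n : ℂ) by positivity) using 1
      ext k l
      by_cases h : k.1 = l.1 <;> simp [blockMat, h, hn'])
    simpa only [smul_kronecker, smul_smul, inv_mul_cancel₀ hn', one_smul] using this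

lemma cond3_iff_cond4 {n p : ℕ} {A11 : Matrix (Fin p) (Fin p) ℂ}
    {A : Fin n → Fin n → Matrix (Fin p) (Fin p) ℂ} : Cond3 n p A11 A ↔ Cond4 n p A11 A := by
  constructor
  · rintro ⟨B, hB, hpos⟩
    refine ⟨_, fun i j hij => if_neg hij, ?_, hpos⟩
    simp only [if_true, Finset.sum_add_distrib, hB]
    simp only [Finset.sum_const, Finset.card_univ, Fintype.card_fin, ← Nat.cast_smul_eq_nsmul ℂ,
      smul_smul, ← add_smul]
    congr 1; ring
  · rintro ⟨R, hoff, hsum, hpos⟩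
    refine ⟨fun i => R i i - (n : ℂ) • A11, ?_, ?_⟩
    · simp only [Finset.sum_sub_distrib, hsum, Finset.sum_const, Finset.card_univ, Fintype.card_fin,
        ← Nat.cast_smul_eq_nsmul ℂ, smul_smul, ← sub_smul]
      congr 1; ring
    · convert hpos using 2
      ext i j : 2
      by_cases h : i = j
      · subst h; simp
      · simp [h, hoff i j h]

/-! ### Consequences of scalar phases -/

/-- The case `r = 1` of the first condition, tested on the scalar system whose `(i, j)` entry is
the phase `star c / n` and whose other entries off the diagonal, except `(j, i)`, vanish. -/
lemma cond1_phase {n p : ℕ} {A11 : Matrix (Fin p) (Fin p) ℂ}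
    {A : Fin n → Fin n → Matrix (Fin p) (Fin p) ℂ} (h : Cond1 n p A11 A) {i j : Fin n} (hij : i ≠ j)
    {c : ℂ} (hc : c * star c = 1) :
    (A11 + (n : ℂ)⁻¹ • (star c • A i j + c • A j i)).PosSemidef := by
  let v : Fin n → ℂ := fun k => if k = i then 1 else if k = j then c else 0
  let d : Fin n → ℂ := fun k => if k = i ∨ k = j then 0 else 1
  have hd : (Matrix.diagonal d).PosSemidef := by
    refine Matrix.PosSemidef.diagonal fun k => ?_
    by_cases hk : k = i ∨ k = j <;> simp [d, hk]
  have h1 := h 1 le_rfl (fun k l => Matrix.of fun _ _ => (n : ℂ)⁻¹ * (v k * star (v l))) (by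
    convert ((hd.add (posSemidef_vecMulVec_self_star v)).submatrix
      (fun k : Fin n × Fin 1 => k.1)).smul (show (0 : ℂ) ≤ (n : ℂ)⁻¹ by positivity) using 1
    ext ⟨k, x⟩ ⟨l, y⟩
    obtain rfl : x = y := Subsingleton.elim _ _
    by_cases hkl : k = l
    · subst hkl
      have : d k + v k * star (v k) = 1 := by
        by_cases hki : k = i
        · simp [d, v, hki]
        · by_cases hkj : k = j
          · subst hkj
            simpa [d, v, hki] using hc
          · simp [d, v, hki, hkj]
      simp only [blockMat, Matrix.of_apply, if_true, Matrix.smul_apply, Matrix.one_apply_eq,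
        Matrix.submatrix_apply, Matrix.add_apply, Matrix.diagonal_apply_eq, vecMulVec_apply,
        Pi.star_apply, this]
    · simp [blockMat, hkl, vecMulVec_apply])
  convert h1.submatrix (fun b : Fin p => ((0 : Fin 1), b)) using 1
  ext a b
  have key : ∑ k, ∑ l, (if k ≠ l then (n : ℂ)⁻¹ * (v k * star (v l)) * A k l a b else 0) =
      (n : ℂ)⁻¹ * (star c * A i j a b + c * A j i a b) := by
    have h0 : ∀ k, k ≠ i → k ≠ j → v k = 0 := fun k h1 h2 => by simp [v, h1, h2]
    have hvi : v i = 1 := by simp [v]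
    have hvj : v j = c := by simp [v, hij.symm]
    have hin : ∀ k, ∑ l, (if k ≠ l then (n : ℂ)⁻¹ * (v k * star (v l)) * A k l a b else 0) =
        (if k ≠ i then (n : ℂ)⁻¹ * v k * A k i a b else 0) +
        (if k ≠ j then (n : ℂ)⁻¹ * (v k * star c) * A k j a b else 0) := by
      intro k
      rw [Fintype.sum_eq_add i j hij]
      · simp [hvi, hvj]
      · rintro l ⟨h1, h2⟩
        simp [h0 l h1 h2]
    simp only [hin]
    rw [Fintype.sum_eq_add i j hij]
    · simp [hvi, hvj, hij, hij.symm]; ring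
    · rintro l ⟨h1, h2⟩
      simp [h0 l h1 h2]
  simp only [Matrix.add_apply, Matrix.smul_apply, Matrix.submatrix_apply, kroneckerMap_apply,
    Matrix.one_apply_eq, Matrix.sum_apply, smul_eq_mul, one_mul]
  rw [← key]
  congr 1
  refine Finset.sum_congr rfl fun k _ => Finset.sum_congr rfl fun l _ => ?_
  split_ifs <;> simp

lemma A11_posSemidef {n p : ℕ} {A11 : Matrix (Fin p) (Fin p) ℂ}
    {A : Fin n → Fin n → Matrix (Fin p) (Fin p) ℂ} (h : Cond1 n p A11 A) (hn : 2 ≤ n) :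
    A11.PosSemidef := by
  have hij : (⟨0, by omega⟩ : Fin n) ≠ ⟨1, by omega⟩ := by simp
  have h1 := cond1_phase h hij (c := 1) (by simp)
  have h2 := cond1_phase h hij (c := -1) (by simp)
  convert (h1.add h2).smul (show (0 : ℂ) ≤ 2⁻¹ by positivity) using 1
  ext a b
  simp; ring

/-- The phases `1` and `I` suffice to see that the prescribed off-diagonal blocks are those of a
Hermitian matrix. -/
lemma A_conjTranspose {n p : ℕ} (hn : n ≠ 0) {A11 : Matrix (Fin p) (Fin p) ℂ}
    {A : Fin n → Fin n → Matrix (Fin p) (Fin p) ℂ} (h : Cond1 n p A11 A)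
    (hA : A11.PosSemidef) {i j : Fin n} (hij : i ≠ j) (a b : Fin p) :
    star (A i j b a) = A j i a b := by
  have hn' : (n : ℂ) ≠ 0 := by exact_mod_cast hn
  have h1 := (cond1_phase h hij (c := 1) (by simp)).isHermitian.apply a b
  have h2 := (cond1_phase h hij (c := Complex.I) (by simp)).isHermitian.apply a b
  have h3 := hA.isHermitian.apply a b
  simp only [Matrix.add_apply, Matrix.smul_apply, smul_eq_mul, star_add, star_mul', star_one,
    star_inv₀, star_natCast, one_mul, h3, add_right_inj, mul_right_inj' (inv_ne_zero hn'),
    Complex.star_def, map_neg, neg_neg, Complex.conj_I] at h1 h2 ⊢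
  linear_combination (1/2) * h1 - (Complex.I/2) * h2 + (1/2) * (starRingEnd ℂ (A i j b a) -
    starRingEnd ℂ (A j i b a) + A i j a b - A j i a b) * Complex.I_sq

lemma eq_zero_of_posSemidef_neg {κ : Type*} [Fintype κ] {M : Matrix κ κ ℂ}
    (h1 : M.PosSemidef) (h2 : (-M).PosSemidef) : M = 0 := by
  refine h1.trace_eq_zero_iff.1 (le_antisymm ?_ h1.trace_nonneg)
  simpa using h2.trace_nonneg

/-- If `A11 = 0`, opposite phases give both signs of the same matrix, so all `A i j` vanish. -/
lemma A_eq_zero {n p : ℕ} (hn : n ≠ 0)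
    {A : Fin n → Fin n → Matrix (Fin p) (Fin p) ℂ} (h : Cond1 n p 0 A) {i j : Fin n}
    (hij : i ≠ j) : A i j = 0 := by
  have hn' : (n : ℂ) ≠ 0 := by exact_mod_cast hn
  have key : ∀ c : ℂ, c * star c = 1 → star c • A i j + c • A j i = 0 := by
    intro c hc
    have h1 := cond1_phase h hij hc
    have h2 := cond1_phase h hij (c := -c) (by simpa using hc)
    have := eq_zero_of_posSemidef_neg h1 (by
      convert h2 using 1
      ext a b
      simp; ring)
    rw [zero_add] at this
    exact (smul_eq_zero.1 this).resolve_left (inv_ne_zero hn')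
  ext a b
  have h1 := congrFun (congrFun (key 1 (by simp)) a) b
  have h2 := congrFun (congrFun (key Complex.I (by simp)) a) b
  simp at h1 h2 ⊢
  linear_combination (1/2) * h1 + (Complex.I/2) * h2 + (1/2) * (A i j a b - A j i a b) * Complex.I_sq

/-! ### The positive lifting from the first condition -/

/-- The quadratic form of `B ⊗ₖ A` at the vectorization of `S` is the entrywise pairing of
`Sᴴ * B * S` with `A`. -/
lemma quad_kron {r p : ℕ} (S : Matrix (Fin r) (Fin p) ℂ) (B : Matrix (Fin r) (Fin r) ℂ)
    (A : Matrix (Fin p) (Fin p) ℂ) :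
    ∑ k : Fin r × Fin p, ∑ l : Fin r × Fin p,
      star (S k.1 k.2) * (B ⊗ₖ A) k l * S l.1 l.2 = ∑ b, ∑ d, (Sᴴ * B * S) b d * A b d := by
  simp only [Fintype.sum_prod_type, kroneckerMap_apply, Matrix.mul_apply, Finset.sum_mul,
    conjTranspose_apply]
  rw [Finset.sum_comm]
  refine Finset.sum_congr rfl fun b _ => ?_
  rw [Finset.sum_congr rfl fun a _ => Finset.sum_comm, Finset.sum_comm]
  refine Finset.sum_congr rfl fun d _ => ?_
  rw [Finset.sum_comm]
  exact Finset.sum_congr rfl fun c _ => Finset.sum_congr rfl fun a _ => by ring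

lemma quad_sum {κ ι : Type*} [Fintype κ] [Fintype ι] (w : κ → ℂ) (M : ι → Matrix κ κ ℂ) :
    ∑ k, ∑ l, star (w k) * (∑ i, M i) k l * w l = ∑ i, ∑ k, ∑ l, star (w k) * M i k l * w l := by
  simp only [Matrix.sum_apply, Finset.mul_sum, Finset.sum_mul]
  conv_rhs => rw [Finset.sum_comm]
  exact Finset.sum_congr rfl fun k _ => Finset.sum_comm

/-- Normalizing the diagonal blocks of a positive definite `H` turns it into a family to which
the first condition applies. -/
lemma pairing_nonneg {n p : ℕ} (hn : n ≠ 0) (hp : 1 ≤ p) {A11 : Matrix (Fin p) (Fin p) ℂ}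
    {A R : Fin n → Fin n → Matrix (Fin p) (Fin p) ℂ} (h : Cond1 n p A11 A)
    (hoff : ∀ i j, i ≠ j → R i j = A i j) (hsum : ∑ i, R i i = (n : ℂ) • A11)
    {H : Matrix (Fin n × Fin p) (Fin n × Fin p) ℂ} (hH : H.PosDef)
    (hHd : ∀ i j a b, H (i, a) (i, b) = H (j, a) (j, b)) :
    0 ≤ (∑ k, ∑ l, H k l * blockMat R k l).re := by
  have hn' : (n : ℂ) ≠ 0 := by exact_mod_cast hn
  let H' : Fin n → Fin n → Matrix (Fin p) (Fin p) ℂ := fun i j => Matrix.of fun a b => H (i, a) (j, b)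
  let i₀ : Fin n := ⟨0, by omega⟩
  have hG : (H' i₀ i₀).PosDef :=
    hH.submatrix (e := fun a : Fin p => (i₀, a)) fun a b hab => (Prod.mk.inj hab).2
  -- The common diagonal block is `Sᴴ * S`; conjugating every block by `S⁻¹` makes it the identity,
  -- and evaluating the quadratic form at the vectorization of `S` undoes this.
  obtain ⟨S, hS⟩ := exists_factor hG.posSemidef
  have hSu : IsUnit S.det := by
    have := hG.det_pos.ne'
    rw [hS, Matrix.det_mul] at this
    exact (right_ne_zero_of_mul this).isUnit
  let T := S⁻¹
  have hTS : T * S = 1 := Matrix.nonsing_inv_mul S hSu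
  have hST : S * T = 1 := Matrix.mul_nonsing_inv S hSu
  have hSTs : Sᴴ * Tᴴ = 1 := by rw [← Matrix.conjTranspose_mul, hTS, Matrix.conjTranspose_one]
  have hTSs : Tᴴ * Sᴴ = 1 := by rw [← Matrix.conjTranspose_mul, hST, Matrix.conjTranspose_one]
  let B : Fin n → Fin n → Matrix (Fin p) (Fin p) ℂ := fun i j => (n : ℂ)⁻¹ • (Tᴴ * H' i j * T)
  have hBd : (fun i j => if i = j then (n : ℂ)⁻¹ • (1 : Matrix (Fin p) (Fin p) ℂ) else B i j)
      = B := by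
    ext i j : 2
    split_ifs with hij
    · subst hij
      have : H' i i = Sᴴ * S := by
        rw [← hS]
        ext a b
        exact hHd _ _ _ _
      simp only [B, this]
      rw [← Matrix.mul_assoc, hTSs, Matrix.one_mul, hST]
    · rfl
  have hBpos : (blockMat B).PosSemidef := by
    let W : Matrix (Fin n × Fin p) (Fin n × Fin p) ℂ :=
      Matrix.of fun k l => if k.1 = l.1 then T k.2 l.2 else 0
    convert (hH.posSemidef.conjTranspose_mul_mul_same W).smul
      (show (0 : ℂ) ≤ (n : ℂ)⁻¹ by positivity) using 1
    ext ⟨i, a⟩ ⟨j, b⟩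
    simp [blockMat, B, W, H', Matrix.mul_apply, Fintype.sum_prod_type, apply_ite]
  have hM := h p hp B (by rw [hBd]; exact hBpos)
  rw [sum_split hn B hoff hsum] at hM
  have hq := psd_re_nonneg hM (fun k => S k.1 k.2)
  have e : ∑ k : Fin p × Fin p, ∑ l : Fin p × Fin p, star (S k.1 k.2) * (∑ i, ∑ j,
      (if i = j then (n : ℂ)⁻¹ • (1 : Matrix (Fin p) (Fin p) ℂ) else B i j) ⊗ₖ R i j) k l *
        S l.1 l.2 = (n : ℂ)⁻¹ * ∑ k, ∑ l, H k l * blockMat R k l := by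
    have e1 : ∀ i j, (if i = j then (n : ℂ)⁻¹ • (1 : Matrix (Fin p) (Fin p) ℂ) else B i j) = B i j :=
      fun i j => congrFun (congrFun hBd i) j
    have e2 : ∀ i j, Sᴴ * B i j * S = (n : ℂ)⁻¹ • H' i j := by
      intro i j
      simp only [B, Matrix.mul_smul, Matrix.smul_mul]
      congr 1
      calc Sᴴ * (Tᴴ * H' i j * T) * S = (Sᴴ * Tᴴ) * H' i j * (T * S) := by
            simp only [Matrix.mul_assoc]
        _ = H' i j := by rw [hSTs, hTS, Matrix.one_mul, Matrix.mul_one]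
    calc _ = ∑ i, ∑ j, ∑ k : Fin p × Fin p, ∑ l : Fin p × Fin p,
          star (S k.1 k.2) * (B i j ⊗ₖ R i j) k l * S l.1 l.2 := by
          simp only [e1, quad_sum (fun k : Fin p × Fin p => S k.1 k.2)]
      _ = ∑ i, ∑ j, ∑ b, ∑ d, (n : ℂ)⁻¹ * (H (i, b) (j, d) * R i j b d) := by
          simp only [quad_kron, e2, Matrix.smul_apply, smul_eq_mul]
          simp only [mul_assoc]
          rfl
      _ = _ := by
          simp only [Fintype.sum_prod_type, Finset.mul_sum]
          refine Finset.sum_congr rfl fun i _ => ?_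
          rw [Finset.sum_comm]
          rfl
  rw [e, ← Complex.ofReal_natCast, ← Complex.ofReal_inv, Complex.re_ofReal_mul] at hq
  exact nonneg_of_mul_nonneg_right hq (by positivity)

lemma cond4_of_cond1 {n p : ℕ} (hn : 2 ≤ n) (hp : 1 ≤ p) {A11 : Matrix (Fin p) (Fin p) ℂ}
    {A : Fin n → Fin n → Matrix (Fin p) (Fin p) ℂ} (h : Cond1 n p A11 A) : Cond4 n p A11 A := by
  have hn0 : n ≠ 0 := by omega
  have hn' : (n : ℂ) ≠ 0 := by exact_mod_cast hn0
  have hA := A11_posSemidef h hn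
  -- The separation argument needs a set of positive trace, so `A11 = 0` is treated apart.
  by_cases hA0 : A11 = 0
  · subst hA0
    refine ⟨0, fun i j hij => (A_eq_zero hn0 h hij).symm, by simp, ?_⟩
    exact Matrix.PosSemidef.zero
  let X : Fin n → Fin n → Matrix (Fin p) (Fin p) ℂ := fun i j => if i = j then A11 else A i j
  have hXoff : ∀ i j, i ≠ j → X i j = A i j := fun i j hij => if_neg hij
  have hXsum : ∑ i, X i i = (n : ℂ) • A11 := by simp [X, Nat.cast_smul_eq_nsmul]
  have hXavg : avg n p (blockMat X) = blockMat X := by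
    ext k l
    by_cases hkl : k.1 = l.1 <;> simp [avg_apply, blockMat, X, hkl, hn']
  have hXh : (blockMat X).IsHermitian := by
    ext ⟨i, a⟩ ⟨j, b⟩
    rw [conjTranspose_apply]
    by_cases hij : i = j
    · subst hij
      simpa [blockMat, X] using hA.isHermitian.apply a b
    · simpa [blockMat, X, hij, Ne.symm hij] using A_conjTranspose hn0 h hA (Ne.symm hij) a b
  have hs := hA.trace_nonneg
  have hs0 : A11.trace ≠ 0 := fun h => hA0 (hA.trace_eq_zero_iff.1 h)
  obtain ⟨s, hs'⟩ : ∃ s : ℝ, A11.trace = s :=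
    ⟨A11.trace.re, Complex.ext rfl (Complex.le_def.1 hs).2.symm⟩
  have hspos : 0 < s := by
    rw [hs'] at hs hs0
    exact lt_of_le_of_ne (by exact_mod_cast hs) (by rintro rfl; simp at hs0)
  have hXtr : (blockMat X).trace = ((n * s : ℝ) : ℂ) := by
    rw [Complex.ofReal_mul, ← hs']
    simp [Matrix.trace, blockMat, X, Fintype.sum_prod_type]
  by_contra hno
  obtain ⟨f, hf1, hf2, hf3⟩ := exists_functional hn0 hXavg (t := n * s) (by positivity) hXtr (by
    intro R hR hRX
    refine hno ⟨fun i j => Matrix.of fun a b => R (i, a) (j, b), ?_, ?_, hR⟩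
    · intro i j hij
      ext a b
      have := congrFun (congrFun hRX (i, a)) (j, b)
      simpa [avg_apply, hij, blockMat, X] using this
    · ext a b
      have := congrFun (congrFun hRX (⟨0, by omega⟩, a)) (⟨0, by omega⟩, b)
      simp [avg_apply, blockMat, X] at this
      simp [Matrix.sum_apply, ← this, hn'])
  obtain ⟨H, hH, hHd, hHr⟩ := exists_density f hf1 hf2
  have h1 := pairing_nonneg hn0 hp h hXoff hXsum hH hHd
  rw [hHr _ hXh] at h1
  exact absurd h1 (not_le.2 hf3)

theorem positivity_in_Mn_mod_Jn (n p : ℕ) (hn : 2 ≤ n) (hp : 1 ≤ p)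
    (A11 : Matrix (Fin p) (Fin p) ℂ)
    (A : Fin n → Fin n → Matrix (Fin p) (Fin p) ℂ) :
    [Cond1 n p A11 A, Cond2 n p A11 A, Cond3 n p A11 A, Cond4 n p A11 A].TFAE := by
  have hn0 : n ≠ 0 := by omega
  tfae_have 1 ↔ 2 := cond1_iff_cond2 hn0
  tfae_have 3 ↔ 4 := cond3_iff_cond4
  tfae_have 1 → 4 := cond4_of_cond1 hn hp
  tfae_have 4 → 1 := cond1_of_cond4 hn0
  tfae_finish
end

section
/- Fix integers n ≥ 2 and p ≥ 1, and let A_{11} ∈ M_p and A_{ij} ∈ M_p (for 1 ≤ i,j ≤ n with i ≠ j) be given. Then the following are equivalent: (i) for every r ≥ 1 and all unitary matrices W_1, …, W_n ∈ M_r, the matrix I_r ⊗ A_{11} + Σ_{i≠j} (1/n)·(W_i W_j^*) ⊗ A_{ij} is positive semidefinite in M_{rp}; (ii) there exist matrices R_{ij} ∈ M_p (1 ≤ i,j ≤ n) with R_{ij} = A_{ij} for all i ≠ j and Σ_{i=1}^n R_{ii} = n·A_{11}, such that the n×n block matrix [R_{ij}] is positive semidefinite in M_{np}. -/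
/-!
Write `L(W)` for the matrix `I ⊗ A₁₁ + (1/n) ∑_{i≠j} W_i W_j* ⊗ A_{ij}` (`pencil`).

If `R` lifts the data (off-diagonal blocks `A_{ij}`, diagonal blocks summing to `n A₁₁`), unitarity
gives `n L(W) = ∑_{i,j} W_i W_j* ⊗ R_{ij}` (`sum_kronecker_eq_smul_pencil`). Factoring `[R_{ij}]`
as `B* B` with block columns `B_i` turns the right side into `Z* Z` with `Z = ∑ W_j* ⊗ B_j`, so a
positive semidefinite lift makes every `L(W)` positive semidefinite.

The converse is by duality. Let `Φ` (`foldDiag`) be the real-linear map that keeps off-diagonal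
blocks and replaces each diagonal block by the sum of all of them. A positive semidefinite lift
exists iff `Φ(T)` lies in the cone `Φ(PSD)`, where `T` has off-diagonal blocks `A_{ij}` and every
diagonal block `A₁₁`. The cone is closed because `Φ(X)` determines `tr X`, which bounds `X`
(`isClosed_foldDiag_posSemidef`). If `Φ(T)` is outside it, Hahn–Banach gives a functional,
nonnegative on the cone and negative at `Φ(T)`; pulled back along `Φ` it is `X ↦ Re tr(X H) / 2` on
Hermitian `X`, with `H` positive semidefinite and all diagonal blocks of `H` equal. Write `H = G* G`
with block columns `G_i`. As `G_i* G_i` is independent of `i`, there are unitaries `U_i` with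
`U_i G_0 = G_i` (`exists_unitary_mul_eq`), and `tr(T H)` becomes `n` times the quadratic form of
`L(U_1ᵀ, …, U_nᵀ)` at a vector built from `G_0` (`trace_mul_nonneg`). Hence `tr(T H) ≥ 0`, a
contradiction.

The separating functional only controls Hermitian matrices, so `T` must be shown to be Hermitian;
this follows from positivity of `L(W)` for suitable permutation matrices
(`offDiag_conjTranspose`, `diag_isHermitian`).
-/


open Kronecker ComplexOrder Matrix

/-! ### Factorization and Gram matrices -/

theorem exists_conjTranspose_mul_self {m : Type*} [Fintype m] [DecidableEq m]
    {M : Matrix m m ℂ} (hM : M.PosSemidef) : ∃ B : Matrix m m ℂ, M = Bᴴ * B := by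
  open scoped MatrixOrder in
  obtain ⟨B, hB⟩ := CStarAlgebra.nonneg_iff_eq_star_mul_self.mp hM.nonneg
  exact ⟨B, hB⟩

/-- Two families of vectors with the same Gram matrix differ by a unitary. -/
theorem exists_unitary_mul_eq {r p : ℕ} (G G' : Matrix (Fin r) (Fin p) ℂ)
    (h : Gᴴ * G = G'ᴴ * G') : ∃ U ∈ unitaryGroup (Fin r) ℂ, U * G = G' := by
  let g := toEuclideanLin G
  let g' := toEuclideanLin G'
  have hnorm : ∀ x, ‖g x‖ = ‖g' x‖ := by
    have key : ∀ (K : Matrix (Fin r) (Fin p) ℂ) x,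
        ((‖toEuclideanLin K x‖ ^ 2 : ℝ) : ℂ) = star x.ofLp ⬝ᵥ ((Kᴴ * K) *ᵥ x.ofLp) := by
      intro K x
      have := inner_self_eq_norm_sq_to_K (𝕜 := ℂ) (toEuclideanLin K x)
      push_cast
      erw [← this]
      rw [EuclideanSpace.inner_eq_star_dotProduct, ofLp_toLpLin, toLin'_apply, ← mulVec_mulVec,
        dotProduct_mulVec, ← star_mulVec, dotProduct_comm]
    intro x
    have h2 := key G x
    rw [h, ← key G' x] at h2
    exact (sq_eq_sq₀ (norm_nonneg _) (norm_nonneg _)).mp (by exact_mod_cast h2)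
  obtain ⟨s, hs⟩ := LinearMap.exists_rightInverse_of_surjective g.rangeRestrict
    g.range_rangeRestrict
  have hs' : ∀ y, g (s y) = y := fun y => congrArg Subtype.val (LinearMap.congr_fun hs y)
  -- `G x ↦ G' x` is a well-defined isometry on the range of `G`; in finite dimension it extends
  -- to the whole space.
  let L : LinearMap.range g →ₗᵢ[ℂ] EuclideanSpace ℂ (Fin r) :=
    { toLinearMap := g' ∘ₗ s
      norm_map' := fun y => by
        change ‖g' (s y)‖ = ‖y‖
        rw [← hnorm, hs']; rfl }
  have hL : ∀ x, L.extend (g x) = g' x := by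
    intro x
    have h1 := L.extend_apply ⟨g x, LinearMap.mem_range_self g x⟩
    rw [h1]
    change g' (s _) = g' x
    rw [← sub_eq_zero, ← map_sub, ← norm_eq_zero, ← hnorm, map_sub, hs', sub_self, norm_zero]
  have hU : toEuclideanLin (toEuclideanLin.symm L.extend.toLinearMap) = L.extend.toLinearMap :=
    LinearEquiv.apply_symm_apply _ _
  set U := toEuclideanLin.symm L.extend.toLinearMap with hUdef
  refine ⟨U, ?_, ?_⟩
  · rw [mem_unitaryGroup_iff', star_eq_conjTranspose]
    apply toEuclideanLin.injective
    rw [toLpLin_mul_same, toEuclideanLin_conjTranspose_eq_adjoint, hU, toLpLin_one]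
    apply LinearMap.ext
    intro x
    apply ext_inner_right ℂ
    intro y
    rw [LinearMap.comp_apply, LinearMap.adjoint_inner_left]
    exact L.extend.inner_map_map x y
  · apply toEuclideanLin.injective
    rw [toLpLin_mul (q := 2), hU]
    apply LinearMap.ext
    intro x
    exact hL x

/-! ### The operator pencil and positive semidefinite lifts -/

/-- The element `I ⊗ A₁₁ + (1/n) ∑_{i≠j} W_i W_j* ⊗ A_{ij}`. The diagonal entries `A i i` are
ignored. -/
noncomputable def pencil {n p r : ℕ} (A11 : Matrix (Fin p) (Fin p) ℂ)
    (A : Fin n → Fin n → Matrix (Fin p) (Fin p) ℂ) (W : Fin n → Matrix (Fin r) (Fin r) ℂ) :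
    Matrix (Fin r × Fin p) (Fin r × Fin p) ℂ :=
  (1 : Matrix (Fin r) (Fin r) ℂ) ⊗ₖ A11 +
        ∑ i : Fin n, ∑ j : Fin n,
          if i ≠ j then ((n : ℂ)⁻¹) • ((W i * (W j)ᴴ) ⊗ₖ A i j) else 0

/-- Any lift of the data, positive or not, recovers the pencil: only the sum of its diagonal blocks
matters because `W_i W_i* = 1`. -/
theorem sum_kronecker_eq_smul_pencil {n p r : ℕ} (hn : n ≠ 0) {A11 : Matrix (Fin p) (Fin p) ℂ}
    {A R : Fin n → Fin n → Matrix (Fin p) (Fin p) ℂ} {W : Fin n → Matrix (Fin r) (Fin r) ℂ}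
    (hW : ∀ i, W i ∈ unitaryGroup (Fin r) ℂ) (hR : ∀ i j, i ≠ j → R i j = A i j)
    (hR' : ∑ i, R i i = (n : ℂ) • A11) :
    ∑ i, ∑ j, (W i * (W j)ᴴ) ⊗ₖ R i j = (n : ℂ) • pencil A11 A W := by
  have hn' : (n : ℂ) ≠ 0 := Nat.cast_ne_zero.mpr hn
  have h1 : (n : ℂ) • ((1 : Matrix (Fin r) (Fin r) ℂ) ⊗ₖ A11) =
      ∑ i, ∑ j, if i = j then (W i * (W j)ᴴ) ⊗ₖ R i j else 0 := by
    simp only [Finset.sum_ite_eq, Finset.mem_univ, if_true]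
    rw [← kronecker_smul, ← hR']
    have : ∀ i, W i * (W i)ᴴ = 1 := fun i => mem_unitaryGroup_iff.mp (hW i)
    simp only [this]
    ext a b
    simp [Matrix.sum_apply, Finset.mul_sum]
  rw [pencil, smul_add, h1, Finset.smul_sum, ← Finset.sum_add_distrib]
  refine Finset.sum_congr rfl fun i _ => ?_
  rw [Finset.smul_sum, ← Finset.sum_add_distrib]
  refine Finset.sum_congr rfl fun j _ => ?_
  by_cases hij : i = j
  · simp [hij]
  · simp [hij, smul_smul, hn', hR i j hij]

theorem pencil_posSemidef_of_lift {n p r : ℕ} (hn : n ≠ 0) {A11 : Matrix (Fin p) (Fin p) ℂ}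
    {A R : Fin n → Fin n → Matrix (Fin p) (Fin p) ℂ} {W : Fin n → Matrix (Fin r) (Fin r) ℂ}
    (hW : ∀ i, W i ∈ unitaryGroup (Fin r) ℂ) (hR : ∀ i j, i ≠ j → R i j = A i j)
    (hR' : ∑ i, R i i = (n : ℂ) • A11) (hpos : (blockMat R).PosSemidef) :
    (pencil A11 A W).PosSemidef := by
  obtain ⟨B, hB⟩ := exists_conjTranspose_mul_self hpos
  let b : Fin n → Matrix (Fin n × Fin p) (Fin p) ℂ := fun i => B.submatrix id (fun k => (i, k))
  have hb : ∀ i j, R i j = (b i)ᴴ * b j := by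
    intro i j
    ext k l
    exact congrFun (congrFun hB (i, k)) (j, l)
  let Z := ∑ j, (W j)ᴴ ⊗ₖ b j
  have hZ : (n : ℂ) • pencil A11 A W = Zᴴ * Z := by
    rw [← sum_kronecker_eq_smul_pencil hn hW hR hR', conjTranspose_sum, Matrix.sum_mul]
    refine Finset.sum_congr rfl fun i _ => ?_
    rw [Matrix.mul_sum]
    refine Finset.sum_congr rfl fun j _ => ?_
    rw [conjTranspose_kronecker, ← mul_kronecker_mul, conjTranspose_conjTranspose, hb]
  have hn' : (n : ℂ) ≠ 0 := Nat.cast_ne_zero.mpr hn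
  have : pencil A11 A W = (n : ℂ)⁻¹ • (Zᴴ * Z) := by
    rw [← hZ, smul_smul, inv_mul_cancel₀ hn', one_smul]
  rw [this]
  refine (posSemidef_conjTranspose_mul_self Z).smul ?_
  simp

/-! ### Hermitian symmetry of the data -/

/-- The proof isolates the single coefficient `A a b` as a block of the pencil, by a special choice
of permutation matrices. -/
theorem offDiag_conjTranspose {n p : ℕ} (hn : n ≠ 0) {A11 : Matrix (Fin p) (Fin p) ℂ}
    {A : Fin n → Fin n → Matrix (Fin p) (Fin p) ℂ}
    (h : ∀ r : ℕ, 1 ≤ r → ∀ W : Fin n → Matrix (Fin r) (Fin r) ℂ,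
      (∀ i, W i ∈ unitaryGroup (Fin r) ℂ) → (pencil A11 A W).PosSemidef)
    {a b : Fin n} (hab : a ≠ b) : (A a b)ᴴ = A b a := by
  -- With the transpositions `(0 i)` on `{0, …, n}`, the product `W i * (W j)ᴴ` has a nonzero
  -- `(c, d)` entry, for distinct nonzero `c` and `d`, only when `i = c` and `j = d`.
  let W : Fin n → Matrix (Fin (n + 1)) (Fin (n + 1)) ℂ := fun i =>
    (Equiv.swap 0 i.succ).toPEquiv.toMatrix
  have hWH : ∀ i, (W i)ᴴ = W i := by
    intro i
    ext x y
    simp only [W, conjTranspose_apply, PEquiv.toMatrix_apply, Equiv.toPEquiv_apply,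
      Option.mem_def, Option.some.injEq]
    have hxy : Equiv.swap 0 i.succ y = x ↔ Equiv.swap 0 i.succ x = y :=
      ⟨by rintro rfl; simp, by rintro rfl; simp⟩
    simp only [hxy]
    split_ifs <;> simp
  have hWW : ∀ i j, W i * (W j)ᴴ =
      (((Equiv.swap 0 i.succ).trans (Equiv.swap 0 j.succ)).toPEquiv.toMatrix) := by
    intro i j
    rw [hWH, Equiv.toPEquiv_trans, PEquiv.toMatrix_trans]
  have hW : ∀ i, W i ∈ unitaryGroup (Fin (n + 1)) ℂ := by
    intro i
    rw [mem_unitaryGroup_iff, star_eq_conjTranspose, hWW]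
    ext x y
    simp [PEquiv.toMatrix_apply, one_apply]
  have hpos := (h (n + 1) (by omega) W hW).isHermitian
  have hentry : ∀ c d : Fin n, c ≠ d → ∀ k l,
      pencil A11 A W (c.succ, k) (d.succ, l) = (n : ℂ)⁻¹ * A c d k l := by
    intro c d hcd k l
    have hcoef : ∀ i j, i ≠ j →
        (W i * (W j)ᴴ) c.succ d.succ = if i = c ∧ j = d then 1 else 0 := by
      intro i j hij
      rw [hWW, PEquiv.toMatrix_apply]
      congr 1
      simp only [Equiv.toPEquiv_apply, Equiv.trans_apply, Option.mem_def, Option.some.injEq,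
        eq_iff_iff]
      by_cases hi : i = c
      · subst hi
        simp
      · rw [Equiv.swap_apply_of_ne_of_ne (Fin.succ_ne_zero c) (by simpa using fun e => hi e.symm)]
        by_cases hj : j = c
        · subst hj
          simp [hi, (Fin.succ_ne_zero d).symm]
        · rw [Equiv.swap_apply_of_ne_of_ne (Fin.succ_ne_zero c)
            (by simpa using fun e => hj e.symm)]
          simp [hi, hcd]
    rw [pencil, Matrix.add_apply, kroneckerMap_apply, one_apply_ne (by simpa using hcd), zero_mul,
      zero_add, Matrix.sum_apply, Finset.sum_eq_single c, Matrix.sum_apply,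
      Finset.sum_eq_single d]
    · simp only [ne_eq, hcd, not_false_eq_true, if_true, Matrix.smul_apply, kroneckerMap_apply]
      rw [hcoef c d hcd]
      simp
    · intro j _ hj
      by_cases hcj : c = j
      · simp [hcj]
      · simp only [ne_eq, hcj, not_false_eq_true, if_true, Matrix.smul_apply, kroneckerMap_apply]
        rw [hcoef c j hcj]
        simp [hj]
    · simp
    · intro i _ hi
      rw [Matrix.sum_apply]
      refine Finset.sum_eq_zero fun j _ => ?_
      by_cases hcj : i = j
      · simp [hcj]
      · simp only [ne_eq, hcj, not_false_eq_true, if_true, Matrix.smul_apply, kroneckerMap_apply]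
        rw [hcoef i j hcj]
        simp [hi]
    · simp
  have hn' : (n : ℂ)⁻¹ ≠ 0 := inv_ne_zero (Nat.cast_ne_zero.mpr hn)
  ext k l
  have := hpos.apply (b.succ, k) (a.succ, l)
  rw [hentry _ _ hab, hentry _ _ hab.symm, star_mul'] at this
  simpa [hn] using this

/-- With all `W i = 1` the pencil is `A₁₁` plus a sum that is Hermitian by
`offDiag_conjTranspose`. -/
theorem diag_isHermitian {n p : ℕ} (hn : n ≠ 0) {A11 : Matrix (Fin p) (Fin p) ℂ}
    {A : Fin n → Fin n → Matrix (Fin p) (Fin p) ℂ}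
    (h : ∀ r : ℕ, 1 ≤ r → ∀ W : Fin n → Matrix (Fin r) (Fin r) ℂ,
      (∀ i, W i ∈ unitaryGroup (Fin r) ℂ) → (pencil A11 A W).PosSemidef) :
    A11ᴴ = A11 := by
  have hpos := (h 1 le_rfl (fun _ => 1) (fun _ => one_mem _)).isHermitian
  set S := ∑ i : Fin n, ∑ j : Fin n, if i ≠ j then
    ((n : ℂ)⁻¹) • (((1 : Matrix (Fin 1) (Fin 1) ℂ) * (1 : Matrix (Fin 1) (Fin 1) ℂ)ᴴ) ⊗ₖ A i j)
    else 0 with hS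
  have hSH : Sᴴ = S := by
    rw [hS, conjTranspose_sum, Finset.sum_comm]
    simp only [conjTranspose_sum]
    refine Finset.sum_congr rfl fun i _ => Finset.sum_congr rfl fun j _ => ?_
    by_cases hij : i = j
    · simp [hij]
    · simp [hij, Ne.symm hij, conjTranspose_smul, conjTranspose_kronecker,
        offDiag_conjTranspose hn h hij]
  have h2 : ((1 : Matrix (Fin 1) (Fin 1) ℂ) ⊗ₖ A11)ᴴ = (1 : Matrix (Fin 1) (Fin 1) ℂ) ⊗ₖ A11 := by
    have : ((1 : Matrix (Fin 1) (Fin 1) ℂ) ⊗ₖ A11 + S)ᴴ = 1 ⊗ₖ A11 + S := hpos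
    rw [conjTranspose_add, hSH] at this
    exact add_right_cancel this
  ext k l
  simpa [kroneckerMap_apply] using congrFun (congrFun h2 (0, k)) (0, l)

/-! ### The closed cone of liftable data -/

/-- The map on block matrices keeping the off-diagonal blocks and replacing every diagonal block by
the sum of all diagonal blocks. It remembers exactly the part of a lift that the data prescribe. -/
def foldDiag (n p : ℕ) : Matrix (Fin n × Fin p) (Fin n × Fin p) ℂ →ₗ[ℝ]
    (Fin n × Fin p → Fin n × Fin p → ℂ) where
  toFun X := fun a b => if a.1 = b.1 then ∑ m, X (m, a.2) (m, b.2) else X a b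
  map_add' X Y := by
    funext a b
    by_cases h : a.1 = b.1 <;> simp [h, Finset.sum_add_distrib]
  map_smul' c X := by
    funext a b
    by_cases h : a.1 = b.1 <;> simp [h, Finset.mul_sum]

theorem foldDiag_apply {n p : ℕ} (X : Matrix (Fin n × Fin p) (Fin n × Fin p) ℂ) (a b) :
    foldDiag n p X a b = if a.1 = b.1 then ∑ m, X (m, a.2) (m, b.2) else X a b := rfl

theorem isClosed_foldDiag_posSemidef {n p : ℕ} (hn : n ≠ 0) :
    IsClosed (foldDiag n p '' {X | X.PosSemidef}) := by
  have : NeZero n := ⟨hn⟩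
  -- `τ (foldDiag X) = Re tr X`, so a bound on `τ` confines the factor `B` of `X = Bᴴ * B` to a
  -- compact box.
  let τ : (Fin n × Fin p → Fin n × Fin p → ℂ) → ℝ := fun y => ∑ k, (y (0, k) (0, k)).re
  have hτc : Continuous τ := by fun_prop
  have hτ : ∀ B : Matrix (Fin n × Fin p) (Fin n × Fin p) ℂ,
      τ (foldDiag n p (Bᴴ * B)) = ∑ k, ∑ m, ∑ c, ‖B c (m, k)‖ ^ 2 := by
    intro B
    simp only [τ, foldDiag_apply, if_true, Complex.re_sum, mul_apply, conjTranspose_apply]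
    refine Finset.sum_congr rfl fun k _ => Finset.sum_congr rfl fun m _ =>
      Finset.sum_congr rfl fun c _ => ?_
    rw [← Complex.normSq_eq_norm_sq, Complex.star_def, ← Complex.normSq_eq_conj_mul_self,
      Complex.ofReal_re]
  refine isClosed_of_closure_subset fun y hy => ?_
  -- Near `y` the cone lies in the image of such a box, which is compact, hence closed.
  set c := τ y + 1 with hc
  let S : Set (Matrix (Fin n × Fin p) (Fin n × Fin p) ℂ) :=
    Set.pi Set.univ fun _ => Set.pi Set.univ fun _ => Metric.closedBall 0 √c
  have hS : IsCompact S :=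
    isCompact_univ_pi fun _ => isCompact_univ_pi fun _ => isCompact_closedBall _ _
  have hcont : Continuous fun B : Matrix (Fin n × Fin p) (Fin n × Fin p) ℂ =>
      foldDiag n p (Bᴴ * B) := by
    refine continuous_pi fun a => continuous_pi fun b => ?_
    simp only [foldDiag_apply]
    split_ifs <;> fun_prop
  have hT := hS.image hcont
  have hopen : IsOpen {z | τ z < c} := isOpen_lt hτc continuous_const
  have hy' := hopen.inter_closure ⟨by simp [hc], hy⟩
  have hsub : {z | τ z < c} ∩ foldDiag n p '' {X | X.PosSemidef} ⊆
      (fun B : Matrix (Fin n × Fin p) (Fin n × Fin p) ℂ => foldDiag n p (Bᴴ * B)) '' S := by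
    rintro _ ⟨hz, X, hX, rfl⟩
    obtain ⟨B, rfl⟩ := exists_conjTranspose_mul_self hX
    refine ⟨B, ?_, rfl⟩
    rintro x - ⟨m, k⟩ -
    rw [mem_closedBall_zero_iff]
    apply Real.le_sqrt_of_sq_le
    have h0 : τ _ < c := hz
    rw [hτ] at h0
    refine le_trans ?_ h0.le
    calc ‖B x (m, k)‖ ^ 2 ≤ ∑ c, ‖B c (m, k)‖ ^ 2 :=
          Finset.single_le_sum (f := fun c => ‖B c (m, k)‖ ^ 2)
            (fun _ _ => by positivity) (Finset.mem_univ x)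
      _ ≤ ∑ m, ∑ c, ‖B c (m, k)‖ ^ 2 :=
          Finset.single_le_sum (f := fun m => ∑ c, ‖B c (m, k)‖ ^ 2)
            (fun _ _ => by positivity) (Finset.mem_univ m)
      _ ≤ _ :=
          Finset.single_le_sum (f := fun k => ∑ m, ∑ c, ‖B c (m, k)‖ ^ 2)
            (fun _ _ => by positivity) (Finset.mem_univ k)
  obtain ⟨B, -, hB⟩ := closure_minimal hsub hT.isClosed hy'
  exact ⟨Bᴴ * B, posSemidef_conjTranspose_mul_self B, hB⟩

theorem exists_separating {n p : ℕ} (hn : n ≠ 0) {T : Fin n × Fin p → Fin n × Fin p → ℂ}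
    (hT : T ∉ foldDiag n p '' {X | X.PosSemidef}) :
    ∃ f : (Fin n × Fin p → Fin n × Fin p → ℂ) →ₗ[ℝ] ℝ,
      f T < 0 ∧ ∀ X : Matrix _ _ ℂ, X.PosSemidef → 0 ≤ f (foldDiag n p X) := by
  have hconv : Convex ℝ (foldDiag n p '' {X | X.PosSemidef}) := by
    refine Convex.linear_image ?_ _
    intro X hX Y hY s t hs ht _
    exact (PosSemidef.smul hX hs).add (PosSemidef.smul hY ht)
  obtain ⟨f, u, hfT, hf⟩ :=
    geometric_hahn_banach_point_closed hconv (isClosed_foldDiag_posSemidef hn) hT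
  have hu : u < 0 := by
    simpa using hf _ ⟨0, PosSemidef.zero, rfl⟩
  refine ⟨f.toLinearMap, hfT.trans hu, fun X hX => ?_⟩
  -- A negative value could be rescaled to equal the separating constant `u`.
  by_contra! hneg
  have hneg' : f (foldDiag n p X) < 0 := hneg
  have h1 := hf _ ⟨(u / f (foldDiag n p X)) • X,
    PosSemidef.smul hX (div_nonneg_of_nonpos hu.le hneg'.le), rfl⟩
  rw [map_smul, map_smul, smul_eq_mul, div_mul_cancel₀ _ hneg'.ne] at h1
  exact lt_irrefl _ h1

/-! ### Matrices representing positive functionals -/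

/-- The matrix `C` representing a real-linear functional `g` on complex matrices as
`g X = Re tr(X C)`; it need not be Hermitian. -/
noncomputable def densityMat {N : Type*} [DecidableEq N] (g : Matrix N N ℂ →ₗ[ℝ] ℝ) :
    Matrix N N ℂ :=
  Matrix.of fun b a => (g (single a b 1) : ℂ) - Complex.I * g (single a b Complex.I)

theorem re_trace_mul_densityMat {N : Type*} [Fintype N] [DecidableEq N]
    (g : Matrix N N ℂ →ₗ[ℝ] ℝ) (X : Matrix N N ℂ) :
    (trace (X * densityMat g)).re = g X := by
  conv_rhs => rw [matrix_eq_sum_single X]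
  simp only [trace, diag_apply, mul_apply, Complex.re_sum, map_sum]
  refine Finset.sum_congr rfl fun a _ => Finset.sum_congr rfl fun b _ => ?_
  have : single a b (X a b) =
      (X a b).re • single a b (1 : ℂ) + (X a b).im • single a b Complex.I := by
    rw [smul_single, smul_single, ← single_add]
    congr 1
    simp [Complex.re_add_im]
  rw [this, map_add, map_smul, map_smul]
  simp [densityMat]

/-- A functional nonnegative on positive semidefinite matrices is represented, on Hermitian
matrices, by the positive semidefinite matrix `C + Cᴴ` with `C = densityMat g`. -/
theorem dual_posSemidef {N : Type*} [Fintype N] [DecidableEq N]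
    (g : Matrix N N ℂ →ₗ[ℝ] ℝ) (hg : ∀ X : Matrix N N ℂ, X.PosSemidef → 0 ≤ g X) :
    (densityMat g + (densityMat g)ᴴ).PosSemidef ∧ ∀ X : Matrix N N ℂ, X.IsHermitian →
      (trace (X * (densityMat g + (densityMat g)ᴴ))).re = 2 * g X := by
  have htr : ∀ X : Matrix N N ℂ, X.IsHermitian →
      (trace (X * (densityMat g + (densityMat g)ᴴ))).re = 2 * g X := by
    intro X hX
    have h1 : (trace (X * (densityMat g)ᴴ)).re = g X := by
      rw [← re_trace_mul_densityMat g X, trace_mul_comm X, ← hX.eq, ← conjTranspose_mul,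
        trace_conjTranspose, hX.eq]
      simp
    rw [mul_add, trace_add, Complex.add_re, h1, re_trace_mul_densityMat]
    ring
  have hH : (densityMat g + (densityMat g)ᴴ).IsHermitian := isHermitian_add_transpose_self _
  refine ⟨.of_dotProduct_mulVec_nonneg hH fun x => ?_, htr⟩
  have hx : (vecMulVec x (star x)).PosSemidef := posSemidef_vecMulVec_self_star x
  have h2 := htr _ hx.isHermitian
  rw [trace_mul_comm, mul_vecMulVec, trace_vecMulVec, dotProduct_comm] at h2
  rw [RCLike.nonneg_iff]
  refine ⟨?_, hH.im_star_dotProduct_mulVec_self x⟩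
  change 0 ≤ Complex.re _
  rw [h2]
  have := hg _ hx
  positivity

/-! ### Duality -/

/-- The quadratic form of `P ⊗ B` at the vectorization of `S`. -/
theorem kronecker_quadraticForm {r p : ℕ} (P : Matrix (Fin r) (Fin r) ℂ)
    (B : Matrix (Fin p) (Fin p) ℂ) (S : Matrix (Fin r) (Fin p) ℂ) :
    star (fun a : Fin r × Fin p => S a.1 a.2) ⬝ᵥ
      ((P ⊗ₖ B) *ᵥ fun a : Fin r × Fin p => S a.1 a.2) = ∑ k, ∑ l, B k l * (Sᴴ * P * S) k l := by
  simp only [dotProduct, mulVec, Fintype.sum_prod_type, mul_apply, conjTranspose_apply,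
    kroneckerMap_apply, Pi.star_apply, Finset.mul_sum, Finset.sum_mul]
  rw [Finset.sum_comm]
  refine Finset.sum_congr rfl fun k _ => ?_
  rw [Finset.sum_comm' (t' := Finset.univ) (s' := fun _ => Finset.univ) (by simp)]
  conv_lhs => enter [2, y]; rw [Finset.sum_comm]
  rw [Finset.sum_comm]
  refine Finset.sum_congr rfl fun l _ => Finset.sum_congr rfl fun y _ =>
    Finset.sum_congr rfl fun x _ => ?_
  ring

/-- Positivity of the pencil at all unitaries tests any lift `R` against every positive semidefinite
`H` with equal diagonal blocks. -/
theorem trace_mul_nonneg {n p : ℕ} (hn : n ≠ 0) (hp : p ≠ 0) {A11 : Matrix (Fin p) (Fin p) ℂ}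
    {A R : Fin n → Fin n → Matrix (Fin p) (Fin p) ℂ}
    (h : ∀ r : ℕ, 1 ≤ r → ∀ W : Fin n → Matrix (Fin r) (Fin r) ℂ,
      (∀ i, W i ∈ unitaryGroup (Fin r) ℂ) → (pencil A11 A W).PosSemidef)
    (hR : ∀ i j, i ≠ j → R i j = A i j) (hR' : ∑ i, R i i = (n : ℂ) • A11)
    {H : Matrix (Fin n × Fin p) (Fin n × Fin p) ℂ} (hH : H.PosSemidef)
    (hdiag : ∀ i j k l, H (i, k) (i, l) = H (j, k) (j, l)) :
    0 ≤ trace (blockMat R * H) := by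
  have : NeZero n := ⟨hn⟩
  obtain ⟨B, hB⟩ := exists_conjTranspose_mul_self hH
  let e : Fin n × Fin p ≃ Fin (n * p) := finProdFinEquiv
  let G : Fin n → Matrix (Fin (n * p)) (Fin p) ℂ := fun i =>
    B.submatrix e.symm (fun k => (i, k))
  have hG : ∀ i j k l, ((G i)ᴴ * G j) k l = H (i, k) (j, l) := by
    intro i j k l
    rw [hB, mul_apply, mul_apply]
    exact e.symm.sum_comp (fun x => Bᴴ (i, k) x * B x (j, l))
  choose U hU hUG using fun i => exists_unitary_mul_eq (G 0) (G i) (by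
    ext k l
    rw [hG, hG]
    exact hdiag _ _ _ _)
  -- Transposes (and the entrywise conjugate of `G 0` below) match the bilinear pairing
  -- `tr(R H)` with the sesquilinear quadratic form.
  let W : Fin n → Matrix (Fin (n * p)) (Fin (n * p)) ℂ := fun i => (U i)ᵀ
  have hW : ∀ i, W i ∈ unitaryGroup (Fin (n * p)) ℂ := by
    intro i
    rw [mem_unitaryGroup_iff]
    have h1 := mem_unitaryGroup_iff'.mp (hU i)
    have h2 := congrArg transpose h1
    rw [transpose_mul, transpose_one] at h2
    exact h2
  let S : Matrix (Fin (n * p)) (Fin p) ℂ := ((G 0)ᴴ)ᵀ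
  have hS : ∀ i j k l, (Sᴴ * (W i * (W j)ᴴ) * S) k l = H (j, l) (i, k) := by
    intro i j k l
    rw [← hG j i l k, ← hUG i, ← hUG j, ← transpose_apply (_ * _) k l]
    have hSH : Sᴴ = (G 0)ᵀ := by
      ext x y
      simp [S]
    have hWH : (W j)ᴴ = ((U j)ᴴ)ᵀ := rfl
    rw [hSH, hWH]
    simp only [conjTranspose_mul, transpose_mul, S, W, Matrix.mul_assoc]
  have hpos := (h (n * p) (Nat.mul_pos (by omega) (by omega)) W hW).dotProduct_mulVec_nonneg
    (fun a => S a.1 a.2)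
  have hpos' : 0 ≤ star (fun a : Fin (n * p) × Fin p => S a.1 a.2) ⬝ᵥ
      (((n : ℂ) • pencil A11 A W) *ᵥ fun a => S a.1 a.2) := by
    rw [smul_mulVec, dotProduct_smul]
    exact mul_nonneg (by simp) hpos
  rw [← sum_kronecker_eq_smul_pencil hn hW hR hR'] at hpos'
  convert hpos' using 1
  simp only [sum_mulVec, dotProduct_sum, kronecker_quadraticForm, hS, trace, diag_apply,
    mul_apply, Fintype.sum_prod_type, blockMat, of_apply]
  refine Finset.sum_congr rfl fun i _ => ?_
  rw [Finset.sum_comm]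

theorem positivity_unitaries_iff_block_lifting (n p : ℕ) (hn : 2 ≤ n) (hp : 1 ≤ p)
    (A11 : Matrix (Fin p) (Fin p) ℂ)
    (A : Fin n → Fin n → Matrix (Fin p) (Fin p) ℂ) :
    (∀ r : ℕ, 1 ≤ r → ∀ W : Fin n → Matrix (Fin r) (Fin r) ℂ,
      (∀ i, W i ∈ Matrix.unitaryGroup (Fin r) ℂ) →
      ((1 : Matrix (Fin r) (Fin r) ℂ) ⊗ₖ A11 +
        ∑ i : Fin n, ∑ j : Fin n,
          if i ≠ j then ((n : ℂ)⁻¹) • ((W i * (W j)ᴴ) ⊗ₖ A i j) else 0).PosSemidef)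
    ↔
    (∃ R : Fin n → Fin n → Matrix (Fin p) (Fin p) ℂ,
      (∀ i j, i ≠ j → R i j = A i j) ∧
      (∑ i, R i i) = (n : ℂ) • A11 ∧
      (blockMat R).PosSemidef) := by
  have hn0 : n ≠ 0 := by omega
  have : NeZero n := ⟨hn0⟩
  constructor
  · intro h
    replace h : ∀ r : ℕ, 1 ≤ r → ∀ W : Fin n → Matrix (Fin r) (Fin r) ℂ,
      (∀ i, W i ∈ unitaryGroup (Fin r) ℂ) → (pencil A11 A W).PosSemidef := h
    let T : Fin n → Fin n → Matrix (Fin p) (Fin p) ℂ := fun i j => if i = j then A11 else A i j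
    have hT : ∀ i j, i ≠ j → T i j = A i j := fun i j hij => if_neg hij
    have hT' : ∑ i, T i i = (n : ℂ) • A11 := by
      simp [T, Nat.cast_smul_eq_nsmul]
    have hTH : (blockMat T).IsHermitian := by
      ext ⟨i, k⟩ ⟨j, l⟩
      change star (T j i l k) = T i j k l
      rw [← conjTranspose_apply]
      by_cases hij : i = j
      · subst hij
        simp only [T, if_true]
        rw [diag_isHermitian hn0 h]
      · rw [hT _ _ hij, hT _ _ (Ne.symm hij), offDiag_conjTranspose hn0 h (Ne.symm hij)]
    by_cases hmem : foldDiag n p (blockMat T) ∈ foldDiag n p '' {X | X.PosSemidef}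
    · obtain ⟨X, hX, hXT⟩ := hmem
      have hXT' := fun a b => congrFun (congrFun hXT a) b
      simp only [foldDiag_apply] at hXT'
      refine ⟨fun i j => of fun k l => X (i, k) (j, l), fun i j hij => ?_, ?_, hX⟩
      · ext k l
        rw [← hT i j hij]
        simpa [hij, blockMat] using hXT' (i, k) (j, l)
      · rw [← hT']
        ext k l
        simpa [Matrix.sum_apply, blockMat] using hXT' (0, k) (0, l)
    · obtain ⟨f, hfT, hf⟩ := exists_separating hn0 hmem
      let g := f ∘ₗ foldDiag n p
      obtain ⟨hH, htr⟩ := dual_posSemidef g hf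
      -- `foldDiag` does not see in which diagonal block an entry sits, so the diagonal blocks of
      -- the representing matrix coincide.
      have hsingle : ∀ i j k l (z : ℂ),
          g (single (i, k) (i, l) z) = g (single (j, k) (j, l) z) := by
        intro i j k l z
        change f _ = f _
        congr 1
        funext a b
        simp only [foldDiag_apply, single_apply, Prod.mk.injEq]
        by_cases hab : a.1 = b.1
        · simp [hab, ite_and]
        · have h1 : ∀ i : Fin n, ¬ ((i = a.1 ∧ k = a.2) ∧ i = b.1 ∧ l = b.2) := by
            rintro i ⟨⟨rfl, -⟩, h2, -⟩
            exact hab h2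
          simp [hab, h1, Prod.ext_iff]
      have hdens : ∀ i j k l, densityMat g (i, k) (i, l) = densityMat g (j, k) (j, l) := by
        intro i j k l
        simp only [densityMat, of_apply]
        rw [hsingle i j, hsingle i j]
      have h0 := trace_mul_nonneg hn0 (by omega) h hT hT' hH (fun i j k l => by
        rw [Matrix.add_apply, Matrix.add_apply, conjTranspose_apply, conjTranspose_apply, hdens i j,
          hdens i j])
      have h1 := (RCLike.nonneg_iff.mp h0).1
      change 0 ≤ Complex.re _ at h1
      rw [htr _ hTH] at h1
      have h2 : g (blockMat T) < 0 := hfT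
      linarith
  · rintro ⟨R, hR, hR', hpos⟩ r - W hW
    exact pencil_posSemidef_of_lift hn0 hW hR hR' hpos
end

section
/- Let n ≥ 2 and let J_n ⊂ M_n be the subspace of diagonal matrices with trace zero. For every p ≥ 1, the set { P + K : P ∈ M_{np} is a positive semidefinite p×p block matrix with n×n blocks, and K is a p×p block matrix each of whose blocks K_{ij} lies in J_n } is a norm-closed subset of M_{np} (equivalently, M_p(M_n)_+ + M_p(J_n) is closed in M_p(M_n)). -/
/-!
The trace of `M_{np}` vanishes on `M_p(J_n)`, while on the positive semidefinite cone it controls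
the size of every entry (`norm_apply_le_trace`). Hence the positive semidefinite matrices of trace
at most `r` form a compact set (`isCompact_posSemidef_trace_le`), and its sum with the closed
subspace `M_p(J_n)` is closed. Inside the open set where the trace has real part less than `r`,
all of `M_p(M_n)_+ + M_p(J_n)` lies in that sum, so the whole set is closed.
-/


open ComplexOrder Matrix

open scoped Pointwise

/-- Each entry of a positive semidefinite matrix is bounded by the trace, because the principal
`2 × 2` minors are nonnegative. -/
lemma norm_apply_le_trace {ι : Type*} [Fintype ι] {P : Matrix ι ι ℂ}
    (hP : P.PosSemidef) (i j : ι) : ‖P i j‖ ≤ P.trace.re := by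
  have hdiag : ∀ k, 0 ≤ (P k k).re ∧ (P k k).im = 0 := fun k => by
    have h := Complex.le_def.1 (hP.diag_nonneg (i := k))
    exact ⟨h.1, h.2.symm⟩
  have hle : ∀ k, (P k k).re ≤ P.trace.re := fun k => by
    simp only [Matrix.trace, Complex.re_sum, Matrix.diag_apply]
    exact Finset.single_le_sum (f := fun k => (P k k).re) (fun m _ => (hdiag m).1)
      (Finset.mem_univ k)
  have hdet := (hP.submatrix ![i, j]).det_nonneg
  rw [Matrix.det_fin_two] at hdet
  have hji : P j i = star (P i j) := (hP.isHermitian.apply j i).symm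
  have hre := (Complex.le_def.1 hdet).1
  simp [hji, (hdiag i).2, (hdiag j).2] at hre
  have hsq : ‖P i j‖ ^ 2 ≤ (P i i).re * (P j j).re := by
    rw [← Complex.normSq_eq_norm_sq, Complex.normSq_apply]
    linarith
  have h0 : 0 ≤ P.trace.re := (hdiag i).1.trans (hle i)
  refine abs_le_of_sq_le_sq' ?_ h0 |>.2
  calc ‖P i j‖ ^ 2 ≤ (P i i).re * (P j j).re := hsq
    _ ≤ P.trace.re * P.trace.re := mul_le_mul (hle i) (hle j) (hdiag j).1 h0
    _ = P.trace.re ^ 2 := (sq _).symm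

lemma isClosed_posSemidef {ι : Type*} [Fintype ι] :
    IsClosed {P : Matrix ι ι ℂ | P.PosSemidef} := by
  simp only [Matrix.posSemidef_iff_dotProduct_mulVec, Set.ofPred_and, Set.ofPred_forall]
  refine IsClosed.inter (isClosed_eq continuous_id.matrix_conjTranspose continuous_id) ?_
  refine isClosed_iInter fun x => isClosed_le continuous_const ?_
  exact continuous_const.dotProduct (continuous_id.matrix_mulVec continuous_const)

lemma isCompact_posSemidef_trace_le {ι : Type*} [Fintype ι] (r : ℝ) :
    IsCompact {P : Matrix ι ι ℂ | P.PosSemidef ∧ P.trace.re ≤ r} := by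
  have hbox : IsCompact (Set.univ.pi fun _ : ι => Set.univ.pi fun _ : ι =>
      Metric.closedBall (0 : ℂ) r) :=
    isCompact_univ_pi fun _ => isCompact_univ_pi fun _ => isCompact_closedBall _ _
  refine hbox.of_isClosed_subset ?_ ?_
  · exact isClosed_posSemidef.inter
      (isClosed_le (Complex.continuous_re.comp continuous_id.matrix_trace) continuous_const)
  · rintro P ⟨hP, hr⟩ i - j -
    exact mem_closedBall_zero_iff.2 ((norm_apply_le_trace hP i j).trans hr)

/-- The subspace `M_p(J_n)` of `M_{np}`: every `n × n` block is diagonal with trace zero,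
written out in terms of the entries. -/
def tracelessDiagBlocks (p n : ℕ) : Set (Matrix (Fin p × Fin n) (Fin p × Fin n) ℂ) :=
  {Y | (∀ i j k l, k ≠ l → Y (i, k) (j, l) = 0) ∧ ∀ i j, ∑ k, Y (i, k) (j, k) = 0}

lemma isClosed_tracelessDiagBlocks (p n : ℕ) : IsClosed (tracelessDiagBlocks p n) := by
  simp only [tracelessDiagBlocks, Set.ofPred_and, Set.ofPred_forall]
  refine IsClosed.inter ?_ ?_
  · exact isClosed_iInter fun i => isClosed_iInter fun j => isClosed_iInter fun k =>
      isClosed_iInter fun l => isClosed_iInter fun _ =>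
        isClosed_eq (continuous_id.matrix_elem _ _) continuous_const
  · exact isClosed_iInter fun i => isClosed_iInter fun j => isClosed_eq
      (continuous_finsetSum _ fun k _ => continuous_id.matrix_elem _ _) continuous_const

lemma trace_eq_zero_of_mem_tracelessDiagBlocks {p n : ℕ}
    {Y : Matrix (Fin p × Fin n) (Fin p × Fin n) ℂ} (hY : Y ∈ tracelessDiagBlocks p n) :
    Y.trace = 0 := by
  simp only [Matrix.trace, Matrix.diag_apply, Fintype.sum_prod_type]
  exact Finset.sum_eq_zero fun i _ => hY.2 i i

lemma mem_tracelessDiagBlocks_iff {p n : ℕ}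
    {Y : Matrix (Fin p × Fin n) (Fin p × Fin n) ℂ} :
    Y ∈ tracelessDiagBlocks p n ↔ ∃ K : Fin p → Fin p → Matrix (Fin n) (Fin n) ℂ,
      (∀ i j, (K i j).IsDiag ∧ (K i j).trace = 0) ∧ Y = blockMat K := by
  constructor
  · rintro ⟨hd, ht⟩
    exact ⟨fun i j => Matrix.of fun k l => Y (i, k) (j, l),
      fun i j => ⟨fun k l hkl => hd i j k l hkl, ht i j⟩, rfl⟩
  · rintro ⟨K, hK, rfl⟩
    exact ⟨fun i j k l hkl => (hK i j).1 hkl, fun i j => (hK i j).2⟩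

/-- `M_p(M_n)_+ + M_p(J_n)` is closed, where `J_n ⊂ M_n` is the space of traceless diagonal
matrices: the set of all sums `P + K` of a positive semidefinite `P ∈ M_p(M_n)` and a block
matrix `K` all of whose `n × n` blocks are diagonal with trace zero is closed in `M_p(M_n)`. -/
theorem Jn_completely_order_proximinal (n p : ℕ) (hn : 2 ≤ n) (hp : 1 ≤ p) :
    IsClosed {X : Matrix (Fin p × Fin n) (Fin p × Fin n) ℂ |
      ∃ (P : Matrix (Fin p × Fin n) (Fin p × Fin n) ℂ)
        (K : Fin p → Fin p → Matrix (Fin n) (Fin n) ℂ),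
        P.PosSemidef ∧
        (∀ i j, (K i j).IsDiag ∧ (K i j).trace = 0) ∧
        X = P + blockMat K} := by
  set S := {X : Matrix (Fin p × Fin n) (Fin p × Fin n) ℂ |
      ∃ (P : Matrix (Fin p × Fin n) (Fin p × Fin n) ℂ)
        (K : Fin p → Fin p → Matrix (Fin n) (Fin n) ℂ),
        P.PosSemidef ∧
        (∀ i j, (K i j).IsDiag ∧ (K i j).trace = 0) ∧
        X = P + blockMat K} with hS
  refine isClosed_of_closure_subset fun X hX => ?_
  -- Any bound exceeding the trace of the limit point `X` works: near `X` the trace stays below it.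
  set r : ℝ := X.trace.re + 1 with hr
  set C := {P : Matrix (Fin p × Fin n) (Fin p × Fin n) ℂ | P.PosSemidef ∧ P.trace.re ≤ r}
  set U := {Y : Matrix (Fin p × Fin n) (Fin p × Fin n) ℂ | Y.trace.re < r}
  have hU : IsOpen U :=
    isOpen_lt (Complex.continuous_re.comp continuous_id.matrix_trace) continuous_const
  have hXU : X ∈ U := lt_add_one X.trace.re
  have hclosed : IsClosed (C + tracelessDiagBlocks p n) :=
    (isClosed_tracelessDiagBlocks p n).add_left_of_isCompact (isCompact_posSemidef_trace_le r)
  have hsub : U ∩ S ⊆ C + tracelessDiagBlocks p n := by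
    rintro Y ⟨hYU, P, K, hP, hK, rfl⟩
    have hmem := mem_tracelessDiagBlocks_iff.2 ⟨K, hK, rfl⟩
    refine Set.add_mem_add ⟨hP, ?_⟩ hmem
    have hlt : (P + blockMat K).trace.re < r := hYU
    rw [Matrix.trace_add, trace_eq_zero_of_mem_tracelessDiagBlocks hmem, add_zero] at hlt
    exact hlt.le
  obtain ⟨P, hP, Y, hY, rfl⟩ :=
    closure_minimal hsub hclosed (hU.inter_closure ⟨hXU, hX⟩)
  obtain ⟨K, hK, rfl⟩ := mem_tracelessDiagBlocks_iff.1 hY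
  exact ⟨P, K, hP.1, hK, rfl⟩
end
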